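/- arXiv:2202.11735 — 3 statements merged into one kernel-verified Lean document; each statement's English description precedes it below -/
import Mathlib

section
/- Let C > 0 be a constant, let X be an ℝ^d random vector, and set X̃ = X with d̃ = d if X has no intercept, and X̃ equal to the last d−1 coordinates of X with d̃ = d−1 if X = (1, (X^{(-1)})')'. Assume d̃ ≥ 1 and that X̃ has a Lebesgue density p_{X̃} on ℝ^{d̃}. Then: (i) if ‖X‖ ≤ √d·m_X almost surely, d is fixed, and p_{X̃} is bounded above by C, there exists a constant ℓ_1 ∈ (0,1), depending only on C, m_X and d, such that P(|u'X| ≤ ℓ_1) ≤ 1/4 for every unit vector u ∈ ℝ^d; (ii) if p_{X̃} is log-concave, ‖E[X̃]‖ ≤ C, and all eigenvalues of Cov(X̃) lie in [C^{-1}, C], there exists a constant ℓ_1 ∈ (0,1), depending only on C, such that P(|u'X| ≤ ℓ_1) ≤ 1/4 for every unit vector u ∈ ℝ^d. -/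
open MeasureTheory Matrix

noncomputable section

/-- The Euclidean norm of a vector in `Fin d → ℝ`. -/
def eNorm {d : ℕ} (x : Fin d → ℝ) : ℝ := Real.sqrt (∑ i, x i ^ 2)

/-- A nonnegative function `p` on `ℝ^d` is log-concave. -/
def IsLogConcaveFn {d : ℕ} (p : (Fin d → ℝ) → ℝ) : Prop :=
  ∀ x y : Fin d → ℝ, ∀ t : ℝ, 0 ≤ t → t ≤ 1 →
    p x ^ t * p y ^ (1 - t) ≤ p (t • x + (1 - t) • y)

lemma bm_compact (K L S : Set ℝ) (hK : IsCompact K) (hL : IsCompact L) (hKn : K.Nonempty)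
    (hLn : L.Nonempty) (hS : ∀ x ∈ K, ∀ y ∈ L, (x + y) / 2 ∈ S) :
    volume K + volume L ≤ 2 * volume S := by
  obtain ⟨a, haK, ha⟩ := hK.exists_isGreatest hKn
  obtain ⟨b, hbL, hb⟩ := hL.exists_isLeast hLn
  have h2 : volume ((fun z => (2⁻¹ : ℝ) * z) ⁻¹' S) = 2 * volume S := by
    rw [Real.volume_preimage_mul_left (by norm_num)]
    norm_num
  rw [← h2]
  have e1 : volume ((fun z => z + (-b)) ⁻¹' K) = volume K := measure_preimage_add_right _ _ _
  have e2 : volume ((fun z => z + (-a)) ⁻¹' L) = volume L := measure_preimage_add_right _ _ _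
  rw [← e1, ← e2, ← measure_union₀ (hL.measurableSet.preimage (by fun_prop)).nullMeasurableSet]
  · apply measure_mono
    rintro z (hz | hz)
    · have := hS _ hz _ hbL
      simp only [Set.mem_preimage]
      convert this using 1; ring
    · have := hS _ haK _ hz
      simp only [Set.mem_preimage]
      convert this using 1; ring
  · refine measure_mono_null (t := {a + b}) ?_ (by simp)
    rintro z ⟨h1, h3⟩
    have i1 := ha h1
    have i2 := hb h3
    simp only at i1 i2
    simp only [Set.mem_singleton_iff]
    linarith

lemma bm_meas (A B S : Set ℝ) (hA : MeasurableSet A) (hB : MeasurableSet B) (hAn : A.Nonempty)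
    (hBn : B.Nonempty) (hS : ∀ x ∈ A, ∀ y ∈ B, (x + y) / 2 ∈ S) :
    volume A + volume B ≤ 2 * volume S := by
  obtain ⟨a, ha⟩ := hAn
  obtain ⟨b, hb⟩ := hBn
  rw [hA.measure_eq_iSup_isCompact, hB.measure_eq_iSup_isCompact]
  have key : ∀ K, (K ⊆ A ∧ IsCompact K) → ∀ L, (L ⊆ B ∧ IsCompact L) →
      volume K + volume L ≤ 2 * volume S := by
    rintro K ⟨hKA, hK⟩ L ⟨hLB, hL⟩
    calc volume K + volume L ≤ volume (insert a K) + volume (insert b L) := by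
          gcongr <;> exact Set.subset_insert _ _
      _ ≤ _ := bm_compact _ _ S (hK.insert a) (hL.insert b) (by simp) (by simp) (by
          intro x hx y hy
          exact hS x (Set.insert_subset ha hKA hx) y (Set.insert_subset hb hLB hy))
  have := ENNReal.biSup_add_biSup_le' (p := fun K => K ⊆ A ∧ IsCompact K)
    (q := fun K => K ⊆ B ∧ IsCompact K) ⟨∅, by simp⟩ ⟨∅, by simp⟩ key
  simpa [iSup_and] using this

/-- One-dimensional Prekopa-Leindler, normalized case. -/
lemma pl_one_norm (f g h : ℝ → ℝ) (hf : Measurable f) (hg : Measurable g) (hh : Measurable h)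
    (hf0 : ∀ x, 0 ≤ f x) (hg0 : ∀ x, 0 ≤ g x) (hh0 : ∀ x, 0 ≤ h x)
    (hf1 : ∀ x, f x ≤ 1) (hg1 : ∀ x, g x ≤ 1)
    (hfs : ∀ l < 1, ∃ x, l < f x) (hgs : ∀ l < 1, ∃ x, l < g x)
    (H : ∀ x y, f x * g y ≤ h ((x + y) / 2) ^ 2) :
    (∫⁻ x, ENNReal.ofReal (f x)) + ∫⁻ x, ENNReal.ofReal (g x) ≤
      2 * ∫⁻ x, ENNReal.ofReal (h x) := by
  rw [lintegral_eq_lintegral_meas_lt _ (ae_of_all _ hf0) hf.aemeasurable,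
    lintegral_eq_lintegral_meas_lt _ (ae_of_all _ hg0) hg.aemeasurable,
    lintegral_eq_lintegral_meas_lt _ (ae_of_all _ hh0) hh.aemeasurable]
  rw [← lintegral_const_mul' _ _ (by simp)]
  refine le_trans (le_lintegral_add _ _) ?_
  refine setLIntegral_mono' measurableSet_Ioi ?_
  intro t ht
  simp only [Set.mem_Ioi] at ht
  by_cases h1 : t < 1
  · refine bm_meas _ _ _ (measurableSet_lt measurable_const hf) (measurableSet_lt measurable_const hg)
      (hfs t h1) (hgs t h1) ?_
    intro x hx y hy
    simp only [Set.mem_ofPred_eq] at hx hy ⊢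
    have := H x y
    refine lt_of_pow_lt_pow_left₀ 2 (hh0 _) (lt_of_lt_of_le ?_ this)
    nlinarith
  · have e1 : {a | t < f a} = ∅ := by
      ext a; simp; linarith [hf1 a]
    have e2 : {a | t < g a} = ∅ := by
      ext a; simp; linarith [hg1 a]
    simp [e1, e2]

/-- bounded case -/
lemma pl_one_bdd (f g h : ℝ → ENNReal) (hf : Measurable f) (hg : Measurable g) (hh : Measurable h)
    (M : ENNReal) (hM : M ≠ ⊤) (hfM : ∀ x, f x ≤ M) (hgM : ∀ x, g x ≤ M)
    (H : ∀ x y, f x * g y ≤ h ((x + y) / 2) ^ 2) :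
    (∫⁻ x, f x) * ∫⁻ x, g x ≤ (∫⁻ x, h x) ^ 2 := by
  set a := ⨆ x, f x with ha
  set b := ⨆ x, g x with hb
  have haM : a ≤ M := iSup_le hfM
  have hbM : b ≤ M := iSup_le hgM
  have hat : a ≠ ⊤ := ne_top_of_le_ne_top hM haM
  have hbt : b ≠ ⊤ := ne_top_of_le_ne_top hM hbM
  by_cases ha0 : a = 0
  · have : ∀ x, f x = 0 := fun x => by
      have := le_iSup f x
      rw [← ha, ha0] at this
      simpa using this
    simp [this]
  by_cases hb0 : b = 0
  · have : ∀ x, g x = 0 := fun x => by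
      have := le_iSup g x
      rw [← hb, hb0] at this
      simpa using this
    simp [this]
  -- real versions
  set α := a.toReal with hα
  set β := b.toReal with hβ
  have hαp : 0 < α := ENNReal.toReal_pos ha0 hat
  have hβp : 0 < β := ENNReal.toReal_pos hb0 hbt
  have hfa : ∀ x, f x ≤ a := fun x => le_iSup f x
  have hgb : ∀ x, g x ≤ b := fun x => le_iSup g x
  have hft : ∀ x, f x ≠ ⊤ := fun x => ne_top_of_le_ne_top hat (hfa x)
  have hgt : ∀ x, g x ≠ ⊤ := fun x => ne_top_of_le_ne_top hbt (hgb x)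
  set s := Real.sqrt (α * β) with hs
  have hsp : 0 < s := Real.sqrt_pos.2 (by positivity)
  have hs2 : s ^ 2 = α * β := Real.sq_sqrt (by positivity)
  have key := pl_one_norm (fun x => (f x).toReal / α) (fun x => (g x).toReal / β)
    (fun x => (min (h x) (ENNReal.ofReal s)).toReal / s)
    (by fun_prop) (by fun_prop) (by fun_prop) (fun x => by positivity) (fun x => by positivity)
    (fun x => by positivity)
    (fun x => by
      rw [div_le_one hαp]; exact ENNReal.toReal_mono hat (hfa x))
    (fun x => by
      rw [div_le_one hβp]; exact ENNReal.toReal_mono hbt (hgb x))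
    (by
      intro l hl
      have : ENNReal.ofReal (l * α) < a := by
        rw [← ENNReal.ofReal_toReal hat]
        exact (ENNReal.ofReal_lt_ofReal_iff hαp).2 (by nlinarith)
      obtain ⟨x, hx⟩ := lt_iSup_iff.1 this
      refine ⟨x, ?_⟩
      rw [lt_div_iff₀ hαp]
      exact lt_of_not_ge fun hle => absurd hx (not_lt.2 ((ENNReal.le_ofReal_iff_toReal_le (hft x) (le_trans ENNReal.toReal_nonneg hle)).2 hle)))
    (by
      intro l hl
      have : ENNReal.ofReal (l * β) < b := by
        rw [← ENNReal.ofReal_toReal hbt]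
        exact (ENNReal.ofReal_lt_ofReal_iff hβp).2 (by nlinarith)
      obtain ⟨x, hx⟩ := lt_iSup_iff.1 this
      refine ⟨x, ?_⟩
      rw [lt_div_iff₀ hβp]
      exact lt_of_not_ge fun hle => absurd hx (not_lt.2 ((ENNReal.le_ofReal_iff_toReal_le (hgt x) (le_trans ENNReal.toReal_nonneg hle)).2 hle)))
    (by
      intro x y
      have h1 : f x * g y ≤ (min (h ((x + y) / 2)) (ENNReal.ofReal s)) ^ 2 := by
        rcases le_total (h ((x + y) / 2)) (ENNReal.ofReal s) with h | h
        · rw [min_eq_left h]; exact H x y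
        · rw [min_eq_right h, ← ENNReal.ofReal_pow hsp.le, hs2, ENNReal.ofReal_mul hαp.le,
            ENNReal.ofReal_toReal hat, ENNReal.ofReal_toReal hbt]
          exact mul_le_mul' (hfa x) (hgb y)
      have h2 := ENNReal.toReal_mono (ENNReal.pow_ne_top (ne_top_of_le_ne_top ENNReal.ofReal_ne_top (min_le_right _ _))) h1
      rw [ENNReal.toReal_mul, ENNReal.toReal_pow] at h2
      rw [div_mul_div_comm, div_pow, hs2]
      gcongr)
  have ef : ∀ (u : ℝ → ENNReal) (hu : ∀ x, u x ≠ ⊤) (c : ℝ) (hc : 0 < c),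
      ∫⁻ x, ENNReal.ofReal ((u x).toReal / c) = (∫⁻ x, u x) / ENNReal.ofReal c := by
    intro u hu c hc
    rw [ENNReal.div_eq_inv_mul, ← lintegral_const_mul' _ _ (by simp [hc])]
    refine lintegral_congr fun x => ?_
    rw [ENNReal.ofReal_div_of_pos hc, ENNReal.ofReal_toReal (hu x), ENNReal.div_eq_inv_mul]
  rw [ef f hft α hαp, ef g hgt β hβp, ef _ (fun x => ne_top_of_le_ne_top ENNReal.ofReal_ne_top (min_le_right _ _)) s hsp] at key
  set I := ∫⁻ x, f x
  set J := ∫⁻ x, g x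
  have hm : ∫⁻ x, min (h x) (ENNReal.ofReal s) ≤ ∫⁻ x, h x := lintegral_mono fun x => min_le_left _ _
  have key2 : I / ENNReal.ofReal α + J / ENNReal.ofReal β ≤ 2 * ((∫⁻ x, h x) / ENNReal.ofReal s) :=
    key.trans (by gcongr)
  set Q := ∫⁻ x, h x
  by_cases hQ : Q = ⊤
  · simp [hQ]
  have hR : 2 * (Q / ENNReal.ofReal s) ≠ ⊤ :=
    ENNReal.mul_ne_top (by simp) (ENNReal.div_ne_top hQ (by simp [hsp]))
  have hI : I ≠ ⊤ := by
    intro hI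
    apply hR
    rw [hI, ENNReal.top_div_of_ne_top (by simp)] at key2
    simpa using key2
  have hJ : J ≠ ⊤ := by
    intro hI
    apply hR
    rw [hI, ENNReal.top_div_of_ne_top (by simp)] at key2
    simpa using key2
  have k3 := ENNReal.toReal_mono hR key2
  rw [ENNReal.toReal_add (ENNReal.div_ne_top hI (by simp [hαp])) (ENNReal.div_ne_top hJ (by simp [hβp]))] at k3
  simp only [ENNReal.toReal_div, ENNReal.toReal_mul, ENNReal.toReal_ofReal hαp.le,
    ENNReal.toReal_ofReal hβp.le, ENNReal.toReal_ofReal hsp.le, ENNReal.toReal_ofNat] at k3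
  rw [← ENNReal.toReal_le_toReal (ENNReal.mul_ne_top hI hJ) (ENNReal.pow_ne_top hQ),
    ENNReal.toReal_mul, ENNReal.toReal_pow]
  have hI0 : 0 ≤ I.toReal / α := by positivity
  have hJ0 : 0 ≤ J.toReal / β := by positivity
  have hQ0 : 0 ≤ Q.toReal / s := by positivity
  have k4 : (I.toReal / α) * (J.toReal / β) ≤ (Q.toReal / s) ^ 2 := by
    nlinarith [sq_nonneg (I.toReal / α - J.toReal / β)]
  rw [div_mul_div_comm, div_pow, hs2, div_le_div_iff_of_pos_right (by positivity)] at k4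
  exact k4

lemma pl_one (f g h : ℝ → ENNReal) (hf : Measurable f) (hg : Measurable g) (hh : Measurable h)
    (H : ∀ x y, f x * g y ≤ h ((x + y) / 2) ^ 2) :
    (∫⁻ x, f x) * ∫⁻ x, g x ≤ (∫⁻ x, h x) ^ 2 := by
  have lim : ∀ u : ℝ → ENNReal, Measurable u →
      Filter.Tendsto (fun n : ℕ => ∫⁻ x, min (u x) n) Filter.atTop (nhds (∫⁻ x, u x)) := by
    intro u hu
    refine lintegral_tendsto_of_tendsto_of_monotone (fun n => (hu.min measurable_const).aemeasurable)
      (ae_of_all _ fun x m n hmn => by dsimp; gcongr) (ae_of_all _ fun x => ?_)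
    have := (tendsto_const_nhds (x := u x)).min ENNReal.tendsto_nat_nhds_top
    simpa using this
  have k : ∀ n : ℕ, (∫⁻ x, min (f x) n) * ∫⁻ x, min (g x) n ≤ (∫⁻ x, h x) ^ 2 := fun n =>
    pl_one_bdd _ _ h (hf.min measurable_const) (hg.min measurable_const) hh n (by simp)
      (fun x => min_le_right _ _) (fun x => min_le_right _ _)
      (fun x y => (mul_le_mul' (min_le_left _ _) (min_le_left _ _)).trans (H x y))
  have mon : ∀ u : ℝ → ENNReal, Monotone (fun n : ℕ => ∫⁻ x, min (u x) n) := by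
    intro u m n hmn
    refine lintegral_mono fun x => ?_
    dsimp only
    gcongr
  have eq : ∀ u : ℝ → ENNReal, Measurable u → ∫⁻ x, u x = ⨆ n : ℕ, ∫⁻ x, min (u x) n :=
    fun u hu => (iSup_eq_of_tendsto (mon u) (lim u hu)).symm
  rw [eq f hf, eq g hg, ENNReal.iSup_mul]
  refine iSup_le fun m => ?_
  rw [ENNReal.mul_iSup]
  refine iSup_le fun n => ?_
  exact (mul_le_mul' (mon f (le_max_left m n)) (mon g (le_max_right m n))).trans (k (max m n))

/-- Midpoint Prekopa-Leindler in dimension `n`. -/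
lemma pl_pi (n : ℕ) : ∀ (f g h : (Fin n → ℝ) → ENNReal), Measurable f → Measurable g →
    Measurable h → (∀ x y, f x * g y ≤ h ((2⁻¹ : ℝ) • (x + y)) ^ 2) →
    (∫⁻ x, f x) * ∫⁻ x, g x ≤ (∫⁻ x, h x) ^ 2 := by
  induction n with
  | zero =>
    intro f g h hf hg hh H
    have e : ∀ u : (Fin 0 → ℝ) → ENNReal, ∫⁻ x, u x = u 0 := by
      intro u
      rw [lintegral_unique]
      have : (volume : Measure (Fin 0 → ℝ)) Set.univ = 1 := by
        rw [volume_pi, Measure.pi_of_empty _ 0]; simp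
      rw [this, mul_one]
      congr 1
      exact Subsingleton.elim _ _
    rw [e, e, e]
    have := H 0 0
    simpa using this
  | succ n ih =>
    intro f g h hf hg hh H
    set e := MeasurableEquiv.piFinSuccAbove (fun _ : Fin (n + 1) => ℝ) 0 with he
    have hpres := (volume_preserving_piFinSuccAbove (fun _ : Fin (n + 1) => ℝ) 0).symm
    have hesymm : ∀ a : ℝ, ∀ y : Fin n → ℝ, e.symm (a, y) = Fin.cons a y := by
      intro a y
      simp [e, MeasurableEquiv.piFinSuccAbove, MeasurableEquiv.symm]
      rfl
    have hfub : ∀ u : (Fin (n + 1) → ℝ) → ENNReal, Measurable u →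
        ∫⁻ x, u x = ∫⁻ a : ℝ, ∫⁻ y : Fin n → ℝ, u (Fin.cons a y) := by
      intro u hu
      rw [← hpres.lintegral_comp hu]
      have := lintegral_prod (μ := (volume : Measure ℝ)) (ν := (volume : Measure (Fin n → ℝ)))
        (fun z => u (e.symm z)) (hu.comp e.symm.measurable).aemeasurable
      refine Eq.trans this ?_
      refine lintegral_congr fun a => lintegral_congr fun y => ?_
      rw [hesymm]
    have hcons : Measurable (fun z : ℝ × (Fin n → ℝ) => (Fin.cons z.1 z.2 : Fin (n + 1) → ℝ)) := by
      convert e.symm.measurable using 2 with z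
      exact (hesymm z.1 z.2).symm
    have hmeas : ∀ u : (Fin (n + 1) → ℝ) → ENNReal, Measurable u →
        Measurable (fun a : ℝ => ∫⁻ y : Fin n → ℝ, u (Fin.cons a y)) := by
      intro u hu
      exact (hu.comp hcons).lintegral_prod_right'
    have hsec : ∀ u : (Fin (n + 1) → ℝ) → ENNReal, Measurable u → ∀ a : ℝ,
        Measurable (fun y : Fin n → ℝ => u (Fin.cons a y)) := by
      intro u hu a
      exact (hu.comp hcons).comp measurable_prodMk_left
    rw [hfub f hf, hfub g hg, hfub h hh]
    refine pl_one _ _ _ (hmeas f hf) (hmeas g hg) (hmeas h hh) ?_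
    intro a b
    refine ih _ _ _ (hsec f hf a) (hsec g hg b) (hsec h hh _) ?_
    intro x y
    refine (H (Fin.cons a x) (Fin.cons b y)).trans (le_of_eq ?_)
    congr 2
    ext i
    refine Fin.cases ?_ (fun j => ?_) i
    · simp; ring
    · simp; ring

/-- A log-concave function agrees a.e. with a measurable function satisfying the midpoint inequality. -/
lemma logconcave_version {d : ℕ} (p : (Fin d → ℝ) → ℝ) (hp0 : ∀ x, 0 ≤ p x)
    (hp : IsLogConcaveFn p) :
    ∃ q : (Fin d → ℝ) → ℝ, Measurable q ∧ (∀ x, 0 ≤ q x) ∧ p =ᵐ[volume] q ∧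
      ∀ x y, q x * q y ≤ q ((2⁻¹ : ℝ) • (x + y)) ^ 2 := by
  set S : Set (Fin d → ℝ) := {x | 0 < p x} with hS
  have hconv : Convex ℝ S := by
    intro x hx y hy a b ha hb hab
    have hb' : b = 1 - a := by linarith
    have := hp x y a ha (by linarith)
    rw [← hb'] at this
    have hx' : 0 < p x := hx
    have hy' : 0 < p y := hy
    exact lt_of_lt_of_le (by positivity) this
  have hconc : ConcaveOn ℝ S (fun x => Real.log (p x)) := by
    refine ⟨hconv, ?_⟩
    intro x hx y hy a b ha hb hab
    have hb' : b = 1 - a := by linarith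
    have := hp x y a ha (by linarith)
    rw [← hb'] at this
    have hx' : 0 < p x := hx
    have hy' : 0 < p y := hy
    have h2 := Real.log_le_log (by positivity) this
    rw [Real.log_mul (by positivity) (by positivity), Real.log_rpow hx', Real.log_rpow hy'] at h2
    simpa using h2
  have hcont : ContinuousOn p (interior S) := by
    have h1 : ContinuousOn (fun x => Real.exp (Real.log (p x))) (interior S) :=
      Real.continuous_exp.comp_continuousOn hconc.continuousOn_interior
    refine h1.congr fun x hx => ?_
    have : 0 < p x := (interior_subset hx : x ∈ S)
    exact (Real.exp_log this).symm
  classical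
  refine ⟨(interior S).indicator p, ?_, ?_, ?_, ?_⟩
  · have : (interior S).indicator p = (interior S).piecewise p 0 := by
      simp
    rw [this]
    exact hcont.measurable_piecewise continuousOn_const isOpen_interior.measurableSet
  · intro x
    exact Set.indicator_nonneg (fun y _ => hp0 y) x
  · have hfr : volume (frontier S) = 0 := hconv.addHaar_frontier _
    have : ∀ᵐ x ∂(volume : Measure (Fin d → ℝ)), x ∉ frontier S := measure_eq_zero_iff_ae_notMem.1 hfr
    filter_upwards [this] with x hx
    by_cases hxi : x ∈ interior S
    · simp [hxi]
    · rw [Set.indicator_of_notMem hxi]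
      have : x ∉ S := fun hxS => hx ⟨subset_closure hxS, hxi⟩
      exact le_antisymm (not_lt.1 this) (hp0 x)
  · intro x y
    by_cases hx : x ∈ interior S
    · by_cases hy : y ∈ interior S
      · have hm : (2⁻¹ : ℝ) • (x + y) ∈ interior S := by
          rw [smul_add]
          exact hconv.interior hx hy (by norm_num) (by norm_num) (by norm_num)
        rw [Set.indicator_of_mem hx, Set.indicator_of_mem hy, Set.indicator_of_mem hm]
        have := hp x y 2⁻¹ (by norm_num) (by norm_num)
        rw [show (1 - 2⁻¹ : ℝ) = 2⁻¹ by norm_num, ← smul_add] at this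
        have h2 := pow_le_pow_left₀ (by have := hp0 x; have := hp0 y; positivity) this 2
        refine le_trans (le_of_eq ?_) h2
        rw [mul_pow, ← Real.rpow_natCast, ← Real.rpow_natCast, ← Real.rpow_mul (hp0 x), ← Real.rpow_mul (hp0 y)]
        norm_num
      · rw [Set.indicator_of_notMem hy]; simp; positivity
    · rw [Set.indicator_of_notMem hx]; simp; positivity

/-- Halfspace inequality. -/
lemma halfspace_logconcave {d : ℕ} {Ω : Type} [MeasurableSpace Ω] (μ : Measure Ω)
    (X : Ω → Fin d → ℝ) (hX : Measurable X) (p : (Fin d → ℝ) → ℝ) (hp0 : ∀ x, 0 ≤ p x)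
    (hp : IsLogConcaveFn p)
    (hd : μ.map X = volume.withDensity (fun x => ENNReal.ofReal (p x))) (a : Fin d → ℝ) (r s : ℝ) :
    μ {ω | r ≤ a ⬝ᵥ X ω} * μ {ω | s ≤ a ⬝ᵥ X ω} ≤ μ {ω | (r + s) / 2 ≤ a ⬝ᵥ X ω} ^ 2 := by
  obtain ⟨q, hq, hq0, hpq, hmid⟩ := logconcave_version p hp0 hp
  have hd' : μ.map X = volume.withDensity (fun x => ENNReal.ofReal (q x)) := by
    rw [hd]
    refine withDensity_congr_ae ?_
    filter_upwards [hpq] with x hx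
    rw [hx]
  have hlin : Measurable (fun x : Fin d → ℝ => a ⬝ᵥ x) := by
    simp only [dotProduct]
    fun_prop
  have hset : ∀ r : ℝ, MeasurableSet {x : Fin d → ℝ | r ≤ a ⬝ᵥ x} := fun r =>
    measurableSet_le measurable_const hlin
  have hT : ∀ r : ℝ, μ {ω | r ≤ a ⬝ᵥ X ω} =
      ∫⁻ x, {x : Fin d → ℝ | r ≤ a ⬝ᵥ x}.indicator (fun x => ENNReal.ofReal (q x)) x := by
    intro r
    rw [lintegral_indicator (hset r), ← withDensity_apply _ (hset r), ← hd', Measure.map_apply hX (hset r)]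
    rfl
  have hqm : Measurable (fun x => ENNReal.ofReal (q x)) := hq.ennreal_ofReal
  rw [hT, hT, hT]
  refine pl_pi d _ _ _ (hqm.indicator (hset _)) (hqm.indicator (hset _)) (hqm.indicator (hset _)) ?_
  intro x y
  by_cases hx : r ≤ a ⬝ᵥ x
  · by_cases hy : s ≤ a ⬝ᵥ y
    · have hm : (r + s) / 2 ≤ a ⬝ᵥ ((2⁻¹ : ℝ) • (x + y)) := by
        rw [dotProduct_smul, dotProduct_add, smul_eq_mul]; linarith
      rw [Set.indicator_of_mem (by exact hx), Set.indicator_of_mem (by exact hy),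
        Set.indicator_of_mem (by exact hm), ← ENNReal.ofReal_mul (hq0 x),
        ← ENNReal.ofReal_pow (hq0 _)]
      exact ENNReal.ofReal_le_ofReal (hmid x y)
    · rw [Set.indicator_of_notMem (s := {x : Fin d → ℝ | s ≤ a ⬝ᵥ x}) (by exact hy)]; simp
  · rw [Set.indicator_of_notMem (s := {x : Fin d → ℝ | r ≤ a ⬝ᵥ x}) (by exact hx)]; simp

lemma seq_decay (T : ℕ → ℝ) (h0 : ∀ k, 0 ≤ T k) (hanti : ∀ k, T (k + 1) ≤ T k)
    (hlc : ∀ k, T k * T (k + 2) ≤ T (k + 1) ^ 2) (hT0 : T 0 ≤ 1) (hT1 : T 1 ≤ 3 / 4 * T 0) (k : ℕ) :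
    T k ≤ (3 / 4) ^ k := by
  have step : ∀ k, T (k + 1) ≤ 3 / 4 * T k := by
    intro k
    induction k with
    | zero => simpa using hT1
    | succ k ih =>
      rcases (h0 k).eq_or_lt with h | h
      · have a1 := h0 (k + 1)
        have a2 := hanti k
        have a3 := hanti (k + 1)
        linarith
      · have := hlc k
        have h2 : T k * T (k + 2) ≤ T k * (3 / 4 * T (k + 1)) := by
          nlinarith [h0 (k + 1)]
        exact le_of_mul_le_mul_left h2 h
  induction k with
  | zero => simpa using hT0
  | succ k ih =>
    rw [pow_succ]
    linarith [step k]

/-- midpoint log-concavity of the upper tail. -/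
def TailLC {Ω : Type} [MeasurableSpace Ω] (μ : Measure Ω) (Y : Ω → ℝ) : Prop :=
  ∀ r s : ℝ, μ {ω | r ≤ Y ω} * μ {ω | s ≤ Y ω} ≤ μ {ω | (r + s) / 2 ≤ Y ω} ^ 2

lemma tail_decay {Ω : Type} [MeasurableSpace Ω] (μ : Measure Ω) [IsProbabilityMeasure μ]
    (Y : Ω → ℝ) (hY : Measurable Y) (hlc : TailLC μ Y) (t l : ℝ) (hl : 0 < l)
    (hq : 1 / 4 < μ {ω | |Y ω - t| ≤ l}) (k : ℕ) :
    μ {ω | (3 * k - 1) * l ≤ Y ω - t} ≤ ENNReal.ofReal ((3 / 4) ^ k) := by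
  set T : ℕ → ℝ := fun k => μ.real {ω | t + (3 * k - 1) * l ≤ Y ω} with hT
  have hset : ∀ k : ℕ, {ω | (3 * k - 1) * l ≤ Y ω - t} = {ω | t + (3 * k - 1) * l ≤ Y ω} := by
    intro k; ext ω; simp only [Set.mem_ofPred_eq]; constructor <;> intro h <;> linarith
  have hq' : 1 / 4 < μ.real {ω | |Y ω - t| ≤ l} := by
    have := (ENNReal.toReal_lt_toReal (by simp) (by simp)).2 hq
    simpa [Measure.real] using this
  have hdec : T k ≤ (3 / 4) ^ k := by
    refine seq_decay T (fun k => measureReal_nonneg) (fun k => ?_) (fun k => ?_) measureReal_le_one ?_ k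
    · refine measureReal_mono ?_
      intro ω hω
      simp only [Set.mem_ofPred_eq] at hω ⊢
      push_cast at hω
      nlinarith
    · have := hlc (t + (3 * k - 1) * l) (t + (3 * ((k + 2 : ℕ) : ℝ) - 1) * l)
      have e : ((t + (3 * k - 1) * l) + (t + (3 * ((k + 2 : ℕ) : ℝ) - 1) * l)) / 2 =
          t + (3 * ((k + 1 : ℕ) : ℝ) - 1) * l := by push_cast; ring
      rw [e] at this
      have h2 := ENNReal.toReal_mono (by simp) this
      rw [ENNReal.toReal_mul, ENNReal.toReal_pow] at h2
      exact h2
    · have h1 : μ.real {ω | |Y ω - t| ≤ l} + T 1 ≤ T 0 := by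
        rw [hT]
        rw [← measureReal_union]
        · refine measureReal_mono ?_
          rintro ω (hω | hω)
          · simp only [Set.mem_ofPred_eq, abs_le] at hω ⊢
            simp; linarith
          · simp only [Set.mem_ofPred_eq] at hω ⊢
            norm_num at hω ⊢
            linarith
        · rw [Set.disjoint_left]
          intro ω h1 h2
          simp only [Set.mem_ofPred_eq, abs_le] at h1 h2
          norm_num at h2
          linarith
        · exact measurableSet_le measurable_const hY
      have h2 : T 0 ≤ 1 := measureReal_le_one
      linarith
  rw [hset]
  exact (ENNReal.le_ofReal_iff_toReal_le (by simp) (by positivity)).2 hdec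

lemma summ_aux : Summable (fun k : ℕ => ((3 * k + 2) ^ 2 * (2 * (3 / 4) ^ k) : ℝ)) := by
  have h2 := summable_pow_mul_geometric_of_norm_lt_one (R := ℝ) 2 (r := 3 / 4) (by norm_num)
  have h1 := summable_pow_mul_geometric_of_norm_lt_one (R := ℝ) 1 (r := 3 / 4) (by norm_num)
  have h0 := summable_pow_mul_geometric_of_norm_lt_one (R := ℝ) 0 (r := 3 / 4) (by norm_num)
  refine (((h2.mul_left 18).add (h1.mul_left 24)).add (h0.mul_left 8)).congr fun k => ?_
  ring

def KK : ℝ := ∑' k : ℕ, ((3 * k + 2) ^ 2 * (2 * (3 / 4) ^ k) : ℝ)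

lemma KK_pos : 0 < KK := summ_aux.tsum_pos (fun k => by positivity) 0 (by norm_num)

lemma second_moment {Ω : Type} [MeasurableSpace Ω] (μ : Measure Ω) [IsProbabilityMeasure μ]
    (Y : Ω → ℝ) (hY : Measurable Y) (hlc : TailLC μ Y) (hlc' : TailLC μ (fun ω => - Y ω))
    (t l : ℝ) (hl : 0 < l) (hq : 1 / 4 < μ {ω | |Y ω - t| ≤ l}) :
    ∫ ω, (Y ω - t) ^ 2 ∂μ ≤ KK * l ^ 2 := by
  have d1 := tail_decay μ Y hY hlc t l hl hq
  have d2 := tail_decay μ (fun ω => - Y ω) hY.neg hlc' (-t) l hl (by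
    convert hq using 4 with ω
    rw [← abs_neg]; ring_nf)
  have hA : ∀ k : ℕ, MeasurableSet {ω | (3 * k - 1) * l ≤ |Y ω - t|} := fun k =>
    measurableSet_le measurable_const (by fun_prop)
  have d3 : ∀ k : ℕ, μ {ω | (3 * k - 1) * l ≤ |Y ω - t|} ≤ ENNReal.ofReal (2 * (3 / 4) ^ k) := by
    intro k
    rw [two_mul, ENNReal.ofReal_add (by positivity) (by positivity)]
    refine le_trans (measure_mono ?_) ((measure_union_le _ _).trans (add_le_add (d1 k) (d2 k)))
    intro ω hω
    simp only [Set.mem_ofPred_eq] at hω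
    rcases le_abs.1 hω with h | h
    · left; exact h
    · right; simp only [Set.mem_ofPred_eq]; linarith
  rw [integral_eq_lintegral_of_nonneg_ae (ae_of_all _ fun ω => sq_nonneg _) (by fun_prop)]
  refine ENNReal.toReal_le_of_le_ofReal (by have := KK_pos; positivity) ?_
  calc ∫⁻ ω, ENNReal.ofReal ((Y ω - t) ^ 2) ∂μ
      ≤ ∫⁻ ω, ∑' k : ℕ, {ω | (3 * k - 1) * l ≤ |Y ω - t|}.indicator
          (fun _ => ENNReal.ofReal ((3 * k + 2) ^ 2 * l ^ 2)) ω ∂μ := by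
        refine lintegral_mono fun ω => ?_
        set k := ⌊(|Y ω - t| / l + 1) / 3⌋₊ with hk
        refine le_trans ?_ (ENNReal.le_tsum k)
        have b0 : 0 ≤ |Y ω - t| / l := by positivity
        have b1 : (k : ℝ) ≤ (|Y ω - t| / l + 1) / 3 := Nat.floor_le (by positivity)
        have b2 : (|Y ω - t| / l + 1) / 3 < k + 1 := Nat.lt_floor_add_one _
        have b3 : |Y ω - t| / l * l = |Y ω - t| := by field_simp
        rw [Set.indicator_of_mem]
        · refine ENNReal.ofReal_le_ofReal ?_
          rw [← sq_abs, ← mul_pow]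
          refine pow_le_pow_left₀ (abs_nonneg _) ?_ 2
          nlinarith
        · simp only [Set.mem_ofPred_eq]
          nlinarith
    _ = ∑' k : ℕ, ENNReal.ofReal ((3 * k + 2) ^ 2 * l ^ 2) * μ {ω | (3 * k - 1) * l ≤ |Y ω - t|} := by
        rw [lintegral_tsum (fun k => (measurable_const.indicator (hA k)).aemeasurable)]
        congr 1; ext k
        rw [lintegral_indicator_const (hA k)]
    _ ≤ ∑' k : ℕ, ENNReal.ofReal ((3 * k + 2) ^ 2 * (2 * (3 / 4) ^ k) * l ^ 2) := by
        refine ENNReal.tsum_le_tsum fun k => ?_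
        refine (mul_le_mul_right (d3 k) _).trans (le_of_eq ?_)
        rw [← ENNReal.ofReal_mul (by positivity)]
        congr 1; ring
    _ = ENNReal.ofReal (KK * l ^ 2) := by
        rw [KK, ← tsum_mul_right, ENNReal.ofReal_tsum_of_nonneg (fun k => by positivity)
          (summ_aux.mul_right _)]

lemma eNorm_nonneg {d : ℕ} (x : Fin d → ℝ) : 0 ≤ eNorm x := Real.sqrt_nonneg _

lemma eNorm_sq {d : ℕ} (x : Fin d → ℝ) : eNorm x ^ 2 = ∑ i, x i ^ 2 :=
  Real.sq_sqrt (Finset.sum_nonneg fun _ _ => sq_nonneg _)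

lemma eNorm_smul {d : ℕ} (c : ℝ) (hc : 0 ≤ c) (x : Fin d → ℝ) : eNorm (c • x) = c * eNorm x := by
  unfold eNorm
  simp only [Pi.smul_apply, smul_eq_mul, mul_pow, ← Finset.mul_sum]
  rw [Real.sqrt_mul (sq_nonneg _), Real.sqrt_sq hc]

lemma dot_sq_le {d : ℕ} (a x : Fin d → ℝ) : (a ⬝ᵥ x) ^ 2 ≤ eNorm a ^ 2 * eNorm x ^ 2 := by
  rw [eNorm_sq, eNorm_sq]
  exact Finset.sum_mul_sq_le_sq_mul_sq _ _ _

lemma abs_dot_le {d : ℕ} (a x : Fin d → ℝ) : |a ⬝ᵥ x| ≤ eNorm a * eNorm x := by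
  refine abs_le_of_sq_le_sq ?_ (mul_nonneg (eNorm_nonneg _) (eNorm_nonneg _))
  rw [mul_pow]; exact dot_sq_le a x

lemma abs_coord_le {d : ℕ} (x : Fin d → ℝ) (i : Fin d) : |x i| ≤ eNorm x := by
  refine abs_le_of_sq_le_sq ?_ (eNorm_nonneg _)
  rw [eNorm_sq]
  exact Finset.single_le_sum (f := fun i => x i ^ 2) (fun i _ => sq_nonneg _) (Finset.mem_univ i)

lemma eNorm_single {d : ℕ} (i : Fin d) : eNorm (Pi.single i (1 : ℝ)) = 1 := by
  unfold eNorm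
  rw [Finset.sum_eq_single i]
  · simp
  · intro j _ hj; simp [hj]
  · simp

lemma eNorm_succ_sq {d : ℕ} (u : Fin (d + 1) → ℝ) : eNorm u ^ 2 = u 0 ^ 2 + eNorm (Fin.tail u) ^ 2 := by
  rw [eNorm_sq, eNorm_sq, Fin.sum_univ_succ]; rfl

lemma dot_cons {d : ℕ} (u : Fin (d + 1) → ℝ) (x : Fin d → ℝ) :
    u ⬝ᵥ (Fin.cons (1 : ℝ) x : Fin (d + 1) → ℝ) = u 0 + Fin.tail u ⬝ᵥ x := by
  simp [dotProduct, Fin.sum_univ_succ, Fin.tail]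

lemma exists_unit {d : ℕ} (hd : 1 ≤ d) (v : Fin d → ℝ) : ∃ a : Fin d → ℝ, eNorm a = 1 ∧ v = eNorm v • a := by
  rcases (eNorm_nonneg v).eq_or_lt with h | h
  · refine ⟨Pi.single ⟨0, hd⟩ 1, eNorm_single _, ?_⟩
    rw [← h, zero_smul]
    ext i
    have := abs_coord_le v i
    rw [← h] at this
    simpa using this
  · refine ⟨(eNorm v)⁻¹ • v, ?_, ?_⟩
    · rw [eNorm_smul _ (by positivity)]; field_simp
    · rw [smul_smul]; field_simp; simp

/-- The intercept reduction. -/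
lemma intercept_reduction {d : ℕ} (hd : 1 ≤ d) {Ω : Type} [MeasurableSpace Ω] (μ : Measure Ω)
    (X : Ω → Fin d → ℝ) (l l' δ : ℝ) (hδ : 0 < δ) (hδ2 : δ ≤ 1 / 2) (hl4 : l < 1 / 4)
    (hll : l ≤ δ * l') (hl' : 0 < l')
    (hA : ∀ a : Fin d → ℝ, eNorm a = 1 → ∀ t : ℝ, μ {ω | |a ⬝ᵥ X ω - t| ≤ l'} ≤ 1 / 4)
    (hB : ∀ a : Fin d → ℝ, eNorm a = 1 → μ {ω | 1 / 2 ≤ δ * |a ⬝ᵥ X ω|} ≤ 1 / 4) :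
    (∀ u : Fin d → ℝ, eNorm u = 1 → μ {ω | |u ⬝ᵥ X ω| ≤ l} ≤ 1 / 4) ∧
    (∀ u : Fin (d + 1) → ℝ, eNorm u = 1 →
      μ {ω | |u ⬝ᵥ Fin.cons (1 : ℝ) (X ω)| ≤ l} ≤ 1 / 4) := by
  constructor
  · intro u hu
    refine le_trans (measure_mono ?_) (hA u hu 0)
    intro ω hω
    simp only [Set.mem_ofPred_eq, sub_zero] at hω ⊢
    nlinarith
  · intro u hu
    obtain ⟨a, ha, hv⟩ := exists_unit hd (Fin.tail u)
    set N := eNorm (Fin.tail u) with hN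
    have hN0 : 0 ≤ N := eNorm_nonneg _
    have hsum : u 0 ^ 2 + N ^ 2 = 1 := by
      rw [← eNorm_succ_sq, hu]; norm_num
    have hdot : ∀ ω, u ⬝ᵥ (Fin.cons (1 : ℝ) (X ω) : Fin (d + 1) → ℝ) = u 0 + N * (a ⬝ᵥ X ω) := by
      intro ω
      rw [dot_cons, hv, smul_dotProduct, smul_eq_mul]
    simp only [hdot]
    by_cases hNδ : N ≤ δ
    · refine le_trans (measure_mono ?_) (hB a ha)
      intro ω hω
      simp only [Set.mem_ofPred_eq] at hω ⊢
      have h0 : 3 / 4 ≤ |u 0| := by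
        rw [← Real.sqrt_sq_eq_abs]
        apply Real.le_sqrt_of_sq_le
        nlinarith
      have h1 : |u 0| ≤ |u 0 + N * (a ⬝ᵥ X ω)| + |N * (a ⬝ᵥ X ω)| := by
        have := abs_sub (u 0 + N * (a ⬝ᵥ X ω)) (N * (a ⬝ᵥ X ω))
        simpa using this
      rw [abs_mul, abs_of_nonneg hN0] at h1
      have h2 : N * |a ⬝ᵥ X ω| ≤ δ * |a ⬝ᵥ X ω| := by gcongr
      linarith
    · push Not at hNδ
      have hNp : 0 < N := hδ.trans hNδ
      refine le_trans (measure_mono ?_) (hA a ha (-(u 0 / N)))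
      intro ω hω
      simp only [Set.mem_ofPred_eq] at hω ⊢
      have e : u 0 + N * (a ⬝ᵥ X ω) = N * (a ⬝ᵥ X ω - -(u 0 / N)) := by field_simp; ring
      rw [e, abs_mul, abs_of_pos hNp] at hω
      have : N * |a ⬝ᵥ X ω - -(u 0 / N)| ≤ N * l' := by
        refine hω.trans (hll.trans ?_)
        gcongr
      exact le_of_mul_le_mul_left this hNp

lemma slab_volume {d : ℕ} (a : Fin d → ℝ) (ha : eNorm a = 1) (t l R : ℝ) (hl : 0 < l) (hR : 0 < R) :
    volume {x : Fin d → ℝ | |a ⬝ᵥ x - t| ≤ l ∧ ∀ j, |x j| ≤ R} ≤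
      ENNReal.ofReal (Real.sqrt d * (2 * l * (2 * R) ^ (d - 1))) := by
  obtain ⟨i, hi⟩ : ∃ i, 1 ≤ Real.sqrt d * |a i| := by
    by_contra hcon
    push Not at hcon
    have h1 : ∀ i, (d : ℝ) * a i ^ 2 < 1 := by
      intro i
      have := hcon i
      have h2 : (Real.sqrt d * |a i|) ^ 2 < 1 := by
        have : 0 ≤ Real.sqrt d * |a i| := by positivity
        nlinarith
      rwa [mul_pow, Real.sq_sqrt (by positivity), sq_abs] at h2
    have hs : ∑ i, a i ^ 2 = 1 := by rw [← eNorm_sq, ha]; norm_num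
    have hdpos : 0 < d := by
      rcases Nat.eq_zero_or_pos d with h | h
      · subst h; simp at hs
      · exact h
    have : ∑ i : Fin d, (d : ℝ) * a i ^ 2 < ∑ i : Fin d, (1 : ℝ) :=
      Finset.sum_lt_sum_of_nonempty ⟨⟨0, hdpos⟩, Finset.mem_univ _⟩ (fun i _ => h1 i)
    rw [← Finset.mul_sum, hs] at this
    simp at this
  set S := {x : Fin d → ℝ | |a ⬝ᵥ x - t| ≤ l ∧ ∀ j, |x j| ≤ R} with hS
  set M : Matrix (Fin d) (Fin d) ℝ := (1 : Matrix (Fin d) (Fin d) ℝ).updateRow i a with hM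
  have hdet : M.det = a i := by
    rw [hM, ← det_transpose, ← updateCol_transpose, transpose_one, ← cramer_apply, cramer_one]
    rfl
  have himg := Measure.addHaar_image_linearMap (volume : Measure (Fin d → ℝ)) (Matrix.toLin' M) S
  rw [LinearMap.det_toLin', hdet] at himg
  have hsub : (Matrix.toLin' M) '' S ⊆
      Set.pi Set.univ (fun j => if j = i then Set.Icc (t - l) (t + l) else Set.Icc (-R) R) := by
    rintro _ ⟨x, ⟨hx1, hx2⟩, rfl⟩ j _
    beta_reduce
    by_cases hj : j = i
    · subst hj
      rw [if_pos rfl, toLin'_apply, mulVec, hM, updateRow_self]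
      rw [abs_le] at hx1
      exact ⟨by linarith, by linarith⟩
    · rw [if_neg hj, toLin'_apply, mulVec, hM, updateRow_ne hj]
      have : (1 : Matrix (Fin d) (Fin d) ℝ) j ⬝ᵥ x = x j := by
        have := congrFun (one_mulVec x) j
        exact this
      rw [this]
      exact abs_le.1 (hx2 j)
  have hvol : volume (Set.pi Set.univ (fun j : Fin d => if j = i then Set.Icc (t - l) (t + l) else Set.Icc (-R) R))
      = ENNReal.ofReal (2 * l * (2 * R) ^ (d - 1)) := by
    rw [volume_pi_pi, ← Finset.mul_prod_erase _ _ (Finset.mem_univ i), if_pos rfl, Real.volume_Icc,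
      Finset.prod_congr rfl (g := fun _ => ENNReal.ofReal (2 * R)), Finset.prod_const,
      Finset.card_erase_of_mem (Finset.mem_univ i), ← ENNReal.ofReal_pow (by positivity),
      ← ENNReal.ofReal_mul (by linarith)]
    · rw [Finset.card_univ, Fintype.card_fin]; congr 1; ring
    · intro j hj
      rw [if_neg (Finset.ne_of_mem_erase hj), Real.volume_Icc]
      congr 1; ring
  have h1 : ENNReal.ofReal |a i| * volume S ≤ ENNReal.ofReal (2 * l * (2 * R) ^ (d - 1)) := by
    rw [← himg, ← hvol]; exact measure_mono hsub
  calc volume S ≤ ENNReal.ofReal (Real.sqrt d * |a i|) * volume S := by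
        conv_lhs => rw [← one_mul (volume S)]
        gcongr
        rw [← ENNReal.ofReal_one]
        exact ENNReal.ofReal_le_ofReal hi
    _ = ENNReal.ofReal (Real.sqrt d) * (ENNReal.ofReal |a i| * volume S) := by
        rw [ENNReal.ofReal_mul (by positivity), mul_assoc]
    _ ≤ ENNReal.ofReal (Real.sqrt d) * ENNReal.ofReal (2 * l * (2 * R) ^ (d - 1)) := by gcongr
    _ = _ := by rw [← ENNReal.ofReal_mul (by positivity)]

lemma slab_prob {d : ℕ} {Ω : Type} [MeasurableSpace Ω] (μ : Measure Ω)
    (X : Ω → Fin d → ℝ) (hX : Measurable X) (p : (Fin d → ℝ) → ℝ) (C : ℝ) (hC : 0 < C)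
    (hpC : ∀ x, p x ≤ C)
    (hd : μ.map X = volume.withDensity (fun x => ENNReal.ofReal (p x))) (R : ℝ) (hR : 0 < R)
    (hXR : ∀ᵐ ω ∂μ, eNorm (X ω) ≤ R) (a : Fin d → ℝ) (ha : eNorm a = 1) (t l : ℝ) (hl : 0 < l) :
    μ {ω | |a ⬝ᵥ X ω - t| ≤ l} ≤ ENNReal.ofReal (C * (Real.sqrt d * (2 * l * (2 * R) ^ (d - 1)))) := by
  have hlin : Measurable (fun x : Fin d → ℝ => |a ⬝ᵥ x - t|) := by
    simp only [dotProduct]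
    fun_prop
  have hSm : MeasurableSet {x : Fin d → ℝ | |a ⬝ᵥ x - t| ≤ l ∧ ∀ j, |x j| ≤ R} := by
    refine (measurableSet_le hlin measurable_const).inter ?_
    have : {x : Fin d → ℝ | ∀ j, |x j| ≤ R} = ⋂ j, {x : Fin d → ℝ | |x j| ≤ R} := by
      ext x; simp
    change MeasurableSet {x : Fin d → ℝ | ∀ j, |x j| ≤ R}
    rw [this]
    exact MeasurableSet.iInter fun j => measurableSet_le (by fun_prop) measurable_const
  calc μ {ω | |a ⬝ᵥ X ω - t| ≤ l}
      ≤ μ (X ⁻¹' {x : Fin d → ℝ | |a ⬝ᵥ x - t| ≤ l ∧ ∀ j, |x j| ≤ R}) := by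
        refine measure_mono_ae ?_
        filter_upwards [hXR] with ω hω h
        exact ⟨h, fun j => (abs_coord_le _ j).trans hω⟩
    _ = ∫⁻ x in {x : Fin d → ℝ | |a ⬝ᵥ x - t| ≤ l ∧ ∀ j, |x j| ≤ R}, ENNReal.ofReal (p x) := by
        rw [← Measure.map_apply hX hSm, hd, withDensity_apply _ hSm]
    _ ≤ ∫⁻ x in {x : Fin d → ℝ | |a ⬝ᵥ x - t| ≤ l ∧ ∀ j, |x j| ≤ R}, ENNReal.ofReal C :=
        lintegral_mono fun x => ENNReal.ofReal_le_ofReal (hpC x)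
    _ = ENNReal.ofReal C * volume {x : Fin d → ℝ | |a ⬝ᵥ x - t| ≤ l ∧ ∀ j, |x j| ≤ R} := by
        rw [setLIntegral_const]
    _ ≤ _ := by
        rw [ENNReal.ofReal_mul hC.le]
        gcongr
        exact slab_volume a ha t l R hl hR

lemma le_of_sq_le_sq' {a b : ℝ} (h : a ^ 2 ≤ b ^ 2) (hb : 0 ≤ b) : a ≤ b :=
  (le_abs_self a).trans (abs_le_of_sq_le_sq h hb)

lemma part_one (C mX : ℝ) (hC : 0 < C) (hmX : 0 < mX) (dt : ℕ) (hdt : 1 ≤ dt) :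
    ∃ l : ℝ, 0 < l ∧ l < 1 ∧
      ∀ (Ω : Type) (_ : MeasurableSpace Ω) (μ : Measure Ω),
      ∀ (Xt : Ω → Fin dt → ℝ), Measurable Xt →
      ∀ p : (Fin dt → ℝ) → ℝ, (∀ x, p x ≤ C) →
        μ.map Xt = volume.withDensity (fun x => ENNReal.ofReal (p x)) →
        (∀ᵐ ω ∂μ, eNorm (Xt ω) ≤ Real.sqrt (dt + 1) * mX) →
        (∀ u : Fin dt → ℝ, eNorm u = 1 → μ {ω | |u ⬝ᵥ Xt ω| ≤ l} ≤ 1 / 4) ∧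
        (∀ u : Fin (dt + 1) → ℝ, eNorm u = 1 →
          μ {ω | |u ⬝ᵥ Fin.cons (1 : ℝ) (Xt ω)| ≤ l} ≤ 1 / 4) := by
  set R := Real.sqrt (dt + 1) * mX with hR
  have hRp : 0 < R := by positivity
  set D := C * (Real.sqrt dt * (2 * (2 * R) ^ (dt - 1))) with hD
  have hDp : 0 < D := by
    have : (0 : ℝ) < dt := by exact_mod_cast hdt
    positivity
  set l' := 1 / (4 * D) with hl'
  have hl'p : 0 < l' := by positivity
  set δ := min (1 / 2) (1 / (4 * R)) with hδ
  have hδp : 0 < δ := by positivity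
  have hδR : δ * R ≤ 1 / 4 := by
    have : δ ≤ 1 / (4 * R) := min_le_right _ _
    calc δ * R ≤ 1 / (4 * R) * R := by gcongr
      _ = 1 / 4 := by field_simp
  refine ⟨min (1 / 8) (δ * l'), by positivity, lt_of_le_of_lt (min_le_left _ _) (by norm_num), ?_⟩
  intro Ω _ μ X hX p hpC hd hb
  refine intercept_reduction hdt μ X _ l' δ hδp (min_le_left _ _)
    (lt_of_le_of_lt (min_le_left _ _) (by norm_num)) (min_le_right _ _) hl'p ?_ ?_
  · intro a ha t
    refine (slab_prob μ X hX p C hC hpC hd R hRp hb a ha t l' hl'p).trans ?_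
    have e : C * (Real.sqrt dt * (2 * l' * (2 * R) ^ (dt - 1))) = 1 / 4 := by
      have : C * (Real.sqrt dt * (2 * l' * (2 * R) ^ (dt - 1))) = D * l' := by rw [hD]; ring
      rw [this, hl']; field_simp
    rw [e, ENNReal.ofReal_div_of_pos (by norm_num)]
    simp
  · intro a ha
    have : μ {ω | 1 / 2 ≤ δ * |a ⬝ᵥ X ω|} = 0 := by
      rw [measure_eq_zero_iff_ae_notMem]
      filter_upwards [hb] with ω hω hmem
      have hmem' : 1 / 2 ≤ δ * |a ⬝ᵥ X ω| := hmem
      have h1 := abs_dot_le a (X ω)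
      rw [ha, one_mul] at h1
      have h2 : δ * |a ⬝ᵥ X ω| ≤ δ * R := by gcongr; exact h1.trans hω
      linarith
    rw [this]; simp

lemma part_two (C : ℝ) (hC : 0 < C) :
    ∃ ℓ1 : ℝ, 0 < ℓ1 ∧ ℓ1 < 1 ∧
      ∀ dt : ℕ, 1 ≤ dt →
      ∀ (Ω : Type) (_ : MeasurableSpace Ω) (μ : Measure Ω), IsProbabilityMeasure μ →
      ∀ (Xt : Ω → Fin dt → ℝ), Measurable Xt →
      ∀ p : (Fin dt → ℝ) → ℝ, (∀ x, 0 ≤ p x) → IsLogConcaveFn p →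
        μ.map Xt = MeasureTheory.volume.withDensity (fun x => ENNReal.ofReal (p x)) →
        eNorm (fun i => ∫ ω, Xt ω i ∂μ) ≤ C →
        (∀ a : Fin dt → ℝ, eNorm a = 1 →
          C⁻¹ ≤ ∫ ω, (a ⬝ᵥ Xt ω - a ⬝ᵥ (fun i => ∫ ω', Xt ω' i ∂μ)) ^ 2 ∂μ ∧
            ∫ ω, (a ⬝ᵥ Xt ω - a ⬝ᵥ (fun i => ∫ ω', Xt ω' i ∂μ)) ^ 2 ∂μ ≤ C) →
        ((∀ u : Fin dt → ℝ, eNorm u = 1 →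
            μ {ω | |u ⬝ᵥ Xt ω| ≤ ℓ1} ≤ 1/4) ∧
          (∀ u : Fin (dt + 1) → ℝ, eNorm u = 1 →
            μ {ω | |u ⬝ᵥ Fin.cons (1 : ℝ) (Xt ω)| ≤ ℓ1} ≤ 1/4)) := by
  have hK := KK_pos
  set l' := min 1 (C⁻¹ / (2 * KK)) with hl'
  have hl'p : 0 < l' := by positivity
  have hl'K : KK * l' ^ 2 < C⁻¹ := by
    have h1 : l' ≤ 1 := min_le_left _ _
    have h2 : l' ≤ C⁻¹ / (2 * KK) := min_le_right _ _
    have h3 : KK * l' ≤ C⁻¹ / 2 := by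
      calc KK * l' ≤ KK * (C⁻¹ / (2 * KK)) := by gcongr
        _ = C⁻¹ / 2 := by field_simp
    have h4 : 0 < C⁻¹ := by positivity
    have h5 : 0 < KK * l' := by positivity
    nlinarith
  set δ := min (1 / 2) (1 / (16 * (C + C ^ 2))) with hδ
  have hδp : 0 < δ := by positivity
  have hδC : 4 * δ ^ 2 * (C + C ^ 2) ≤ 1 / 4 := by
    have h1 : δ ≤ 1 / 2 := min_le_left _ _
    have h2 : δ * (C + C ^ 2) ≤ 1 / 16 := by
      calc δ * (C + C ^ 2) ≤ 1 / (16 * (C + C ^ 2)) * (C + C ^ 2) := by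
            gcongr; exact min_le_right _ _
        _ = 1 / 16 := by field_simp
    have h3 : 0 < δ * (C + C ^ 2) := by positivity
    nlinarith
  refine ⟨min (1 / 8) (δ * l'), by positivity, lt_of_le_of_lt (min_le_left _ _) (by norm_num), ?_⟩
  intro dt hdt Ω _ μ hμ X hX p hp0 hp hd hmean hcov
  set m : Fin dt → ℝ := fun i => ∫ ω', X ω' i ∂μ with hm
  have hYm : ∀ a : Fin dt → ℝ, Measurable (fun ω => a ⬝ᵥ X ω) := by
    intro a
    simp only [dotProduct]
    fun_prop
  have hCi : 0 < C⁻¹ := by positivity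
  have hY2 : ∀ a : Fin dt → ℝ, eNorm a = 1 → MemLp (fun ω => a ⬝ᵥ X ω) 2 μ := by
    intro a ha
    have hint : Integrable (fun ω => (a ⬝ᵥ X ω - a ⬝ᵥ m) ^ 2) μ := by
      by_contra hcon
      have := (hcov a ha).1
      rw [integral_undef hcon] at this
      linarith
    have h1 : MemLp (fun ω => a ⬝ᵥ X ω - a ⬝ᵥ m) 2 μ :=
      (memLp_two_iff_integrable_sq ((hYm a).sub_const _).aestronglyMeasurable).2 hint
    have h2 := h1.add (memLp_const (a ⬝ᵥ m))
    convert h2 using 1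
    ext ω; simp
  have hXi : ∀ i, Integrable (fun ω => X ω i) μ := by
    intro i
    have h1 := (hY2 (Pi.single i 1) (eNorm_single i)).integrable (by norm_num)
    simpa using h1
  have hEY : ∀ a : Fin dt → ℝ, ∫ ω, a ⬝ᵥ X ω ∂μ = a ⬝ᵥ m := by
    intro a
    simp only [dotProduct]
    rw [integral_finsetSum _ (fun i _ => (hXi i).const_mul _)]
    simp only [integral_const_mul, hm]
  have hshift : ∀ a : Fin dt → ℝ, eNorm a = 1 → ∀ t : ℝ,
      ∫ ω, (a ⬝ᵥ X ω - t) ^ 2 ∂μ = ∫ ω, (a ⬝ᵥ X ω - a ⬝ᵥ m) ^ 2 ∂μ + (a ⬝ᵥ m - t) ^ 2 := by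
    intro a ha t
    have hi1 : Integrable (fun ω => a ⬝ᵥ X ω - a ⬝ᵥ m) μ :=
      ((hY2 a ha).integrable (by norm_num)).sub (integrable_const _)
    have hi2 : Integrable (fun ω => (a ⬝ᵥ X ω - a ⬝ᵥ m) ^ 2) μ :=
      ((hY2 a ha).sub (memLp_const (a ⬝ᵥ m))).integrable_sq
    have e : ∀ ω, (a ⬝ᵥ X ω - t) ^ 2 = (a ⬝ᵥ X ω - a ⬝ᵥ m) ^ 2 +
        (2 * (a ⬝ᵥ m - t) * (a ⬝ᵥ X ω - a ⬝ᵥ m) + (a ⬝ᵥ m - t) ^ 2) := fun ω => by ring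
    simp only [e]
    have hz : ∫ ω, (a ⬝ᵥ X ω - a ⬝ᵥ m) ∂μ = 0 := by
      rw [integral_sub ((hY2 a ha).integrable (by norm_num)) (integrable_const _), hEY]
      simp
    have hi3 : Integrable (fun ω => 2 * (a ⬝ᵥ m - t) * (a ⬝ᵥ X ω - a ⬝ᵥ m) + (a ⬝ᵥ m - t) ^ 2) μ :=
      (hi1.const_mul _).add (integrable_const _)
    rw [integral_add hi2 hi3,
      integral_add (hi1.const_mul _) (integrable_const _), integral_const_mul, hz]
    simp
  refine intercept_reduction hdt μ X _ l' δ hδp (min_le_left _ _)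
    (lt_of_le_of_lt (min_le_left _ _) (by norm_num)) (min_le_right _ _) hl'p ?_ ?_
  · intro a ha t
    by_contra hcon
    push Not at hcon
    have hs := second_moment μ (fun ω => a ⬝ᵥ X ω) (hYm a)
      (halfspace_logconcave μ X hX p hp0 hp hd a)
      (by
        have := halfspace_logconcave μ X hX p hp0 hp hd (-a)
        simpa only [neg_dotProduct] using! this) t l' hl'p hcon
    rw [hshift a ha t] at hs
    have := (hcov a ha).1
    nlinarith [sq_nonneg (a ⬝ᵥ m - t)]
  · intro a ha
    have h2 : ∫ ω, (a ⬝ᵥ X ω) ^ 2 ∂μ ≤ C + C ^ 2 := by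
      have h3 := hshift a ha 0
      simp only [sub_zero] at h3
      rw [h3]
      have h4 := dot_sq_le a m
      rw [ha, one_pow, one_mul] at h4
      have h5 : eNorm m ^ 2 ≤ C ^ 2 := pow_le_pow_left₀ (eNorm_nonneg _) hmean 2
      linarith [(hcov a ha).2]
    have hmk := mul_meas_ge_le_integral_of_nonneg (μ := μ) (f := fun ω => (a ⬝ᵥ X ω) ^ 2)
      (ae_of_all _ fun ω => sq_nonneg _) (hY2 a ha).integrable_sq (1 / (4 * δ ^ 2))
    have h6 : μ.real {ω | 1 / (4 * δ ^ 2) ≤ (a ⬝ᵥ X ω) ^ 2} ≤ 1 / 4 := by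
      have h7 := hmk.trans h2
      rw [div_mul_eq_mul_div, one_mul, div_le_iff₀ (by positivity)] at h7
      linarith
    have h8 : μ {ω | 1 / (4 * δ ^ 2) ≤ (a ⬝ᵥ X ω) ^ 2} ≤ 1 / 4 := by
      have := (ENNReal.le_ofReal_iff_toReal_le (measure_ne_top _ _) (by norm_num)).2 h6
      refine this.trans ?_
      rw [ENNReal.ofReal_div_of_pos (by norm_num)]
      simp
    refine le_trans (measure_mono ?_) h8
    intro ω hω
    simp only [Set.mem_ofPred_eq] at hω ⊢
    rw [div_le_iff₀ (by positivity), ← sq_abs (a ⬝ᵥ X ω)]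
    nlinarith

/-- (i) If `X̃` has a Lebesgue density bounded by `C`, and `‖X‖ ≤ √d m_X` a.s.
(where either `X = X̃` or `X = (1, X̃')'` with an intercept), then there is `ℓ₁ ∈ (0,1)`,
depending only on `C, m_X` and the dimension, with `P(|u'X| ≤ ℓ₁) ≤ 1/4` for all unit `u`.
(ii) If the density of `X̃` is log-concave with `‖E[X̃]‖ ≤ C` and covariance spectrum in
`[C⁻¹, C]`, the same holds with `ℓ₁` depending only on `C`. -/
theorem stmt_6 (C mX : ℝ) (hC : 0 < C) (hmX : 0 < mX) :
    -- Part (i): bounded density, fixed dimension.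
    (∀ dt : ℕ, 1 ≤ dt →
      ∃ ℓ1 : ℝ, 0 < ℓ1 ∧ ℓ1 < 1 ∧
        ∀ (Ω : Type) (_ : MeasurableSpace Ω) (μ : Measure Ω), IsProbabilityMeasure μ →
        ∀ (Xt : Ω → Fin dt → ℝ), Measurable Xt →
        ∀ p : (Fin dt → ℝ) → ℝ, (∀ x, 0 ≤ p x) → (∀ x, p x ≤ C) →
          μ.map Xt = MeasureTheory.volume.withDensity (fun x => ENNReal.ofReal (p x)) →
          -- case without an intercept: `X = X̃`, `d = d̃`
          ((∀ᵐ ω ∂μ, eNorm (Xt ω) ≤ Real.sqrt dt * mX) →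
            ∀ u : Fin dt → ℝ, eNorm u = 1 →
              μ {ω | |u ⬝ᵥ Xt ω| ≤ ℓ1} ≤ 1/4) ∧
          -- case with an intercept: `X = (1, X̃')'`, `d = d̃ + 1`
          ((∀ᵐ ω ∂μ, eNorm (Fin.cons (1 : ℝ) (Xt ω)) ≤ Real.sqrt (dt + 1) * mX) →
            ∀ u : Fin (dt + 1) → ℝ, eNorm u = 1 →
              μ {ω | |u ⬝ᵥ Fin.cons (1 : ℝ) (Xt ω)| ≤ ℓ1} ≤ 1/4)) ∧
    -- Part (ii): log-concave density, dimension-free constant.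
    (∃ ℓ1 : ℝ, 0 < ℓ1 ∧ ℓ1 < 1 ∧
      ∀ dt : ℕ, 1 ≤ dt →
      ∀ (Ω : Type) (_ : MeasurableSpace Ω) (μ : Measure Ω), IsProbabilityMeasure μ →
      ∀ (Xt : Ω → Fin dt → ℝ), Measurable Xt →
      ∀ p : (Fin dt → ℝ) → ℝ, (∀ x, 0 ≤ p x) → IsLogConcaveFn p →
        μ.map Xt = MeasureTheory.volume.withDensity (fun x => ENNReal.ofReal (p x)) →
        eNorm (fun i => ∫ ω, Xt ω i ∂μ) ≤ C →
        (∀ a : Fin dt → ℝ, eNorm a = 1 →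
          C⁻¹ ≤ ∫ ω, (a ⬝ᵥ Xt ω - a ⬝ᵥ (fun i => ∫ ω', Xt ω' i ∂μ)) ^ 2 ∂μ ∧
            ∫ ω, (a ⬝ᵥ Xt ω - a ⬝ᵥ (fun i => ∫ ω', Xt ω' i ∂μ)) ^ 2 ∂μ ≤ C) →
        ((∀ u : Fin dt → ℝ, eNorm u = 1 →
            μ {ω | |u ⬝ᵥ Xt ω| ≤ ℓ1} ≤ 1/4) ∧
          (∀ u : Fin (dt + 1) → ℝ, eNorm u = 1 →
            μ {ω | |u ⬝ᵥ Fin.cons (1 : ℝ) (Xt ω)| ≤ ℓ1} ≤ 1/4))) := by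
  constructor
  · intro dt hdt
    obtain ⟨l, h0, h1, H⟩ := part_one C mX hC hmX dt hdt
    refine ⟨l, h0, h1, ?_⟩
    intro Ω _ μ hμ Xt hXt p hp0 hpC hd
    have hR : Real.sqrt dt * mX ≤ Real.sqrt (dt + 1) * mX := by
      gcongr; linarith
    constructor
    · intro hb
      exact (H Ω _ μ Xt hXt p hpC hd (hb.mono fun ω h => h.trans hR)).1
    · intro hb
      refine (H Ω _ μ Xt hXt p hpC hd (hb.mono fun ω h => le_trans ?_ h)).2
      refine le_of_sq_le_sq' ?_ (eNorm_nonneg _)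
      rw [eNorm_succ_sq (Fin.cons (1 : ℝ) (Xt ω)), Fin.tail_cons]
      simp
  · exact part_two C hC
end
end

section
/- Fix λ > 0 and integers n, d_1, d_2 ≥ 1. Let a ∈ ℝ^{d_1}, and let z_1, ..., z_n be vectors in ℝ^{d_2}. Define z̃_i = (a', z_i')' ∈ ℝ^{d_1+d_2} and z̄_i = (1, z_i')' ∈ ℝ^{1+d_2} for each i ∈ [n]. Then for any v ∈ ℝ^{d_2}, setting ṽ = (a', v')' and v̄ = (1, v')': ṽ'(λ·I_{d_1+d_2} + Σ_{i=1}^n z̃_i z̃_i')^{-1} ṽ ≤ max(1, ‖a‖²) · v̄'(λ·I_{1+d_2} + Σ_{i=1}^n z̄_i z̄_i')^{-1} v̄. -/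
open Matrix

/-- The regularised Gram matrix. -/
noncomputable def gramReg {m n : Type} [Fintype m] [DecidableEq m] [Fintype n] (lam : ℝ)
    (u : n → m → ℝ) : Matrix m m ℝ := lam • (1 : Matrix m m ℝ) + ∑ i, vecMulVec (u i) (u i)

lemma gramReg_form {m n : Type} [Fintype m] [DecidableEq m] [Fintype n] (lam : ℝ)
    (u : n → m → ℝ) (s t : m → ℝ) :
    s ⬝ᵥ (gramReg lam u *ᵥ t) = lam * (s ⬝ᵥ t) + ∑ i, (u i ⬝ᵥ s) * (u i ⬝ᵥ t) := by
  unfold gramReg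
  rw [add_mulVec, dotProduct_add, smul_mulVec, one_mulVec, dotProduct_smul, smul_eq_mul,
    sum_mulVec, dotProduct_sum]
  congr 1
  refine Finset.sum_congr rfl fun i _ => ?_
  rw [vecMulVec_mulVec, dotProduct_comm (u i) s]
  simp [mul_comm]

lemma gramReg_inv {m n : Type} [Fintype m] [DecidableEq m] [Fintype n] (lam : ℝ)
    (hlam : 0 < lam) (u : n → m → ℝ) (x : m → ℝ) :
    gramReg lam u *ᵥ ((gramReg lam u)⁻¹ *ᵥ x) = x := by
  have hu : IsUnit (gramReg lam u) := by
    rw [← mulVec_injective_iff_isUnit]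
    intro s t hst
    have h0 : gramReg lam u *ᵥ (s - t) = 0 := by
      rw [mulVec_sub]; exact sub_eq_zero.mpr hst
    have h1 := gramReg_form lam u (s - t) (s - t)
    rw [h0, dotProduct_zero] at h1
    have h2 : 0 ≤ ∑ i, (u i ⬝ᵥ (s - t)) * (u i ⬝ᵥ (s - t)) :=
      Finset.sum_nonneg fun i _ => mul_self_nonneg _
    have h3 : 0 ≤ (s - t) ⬝ᵥ (s - t) := Finset.sum_nonneg fun i _ => mul_self_nonneg _
    have h4 : (s - t) ⬝ᵥ (s - t) = 0 := by nlinarith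
    exact sub_eq_zero.mp (dotProduct_self_eq_zero.mp h4)
  rw [mulVec_mulVec, Matrix.mul_nonsing_inv _ ((Matrix.isUnit_iff_isUnit_det _).mp hu), one_mulVec]

lemma gramReg_eq {m n : Type} [Fintype m] [DecidableEq m] [Fintype n] (lam : ℝ)
    (hlam : 0 < lam) (u : n → m → ℝ) (x : m → ℝ) :
    ∃ w : m → ℝ, x ⬝ᵥ ((gramReg lam u)⁻¹ *ᵥ x)
      = 2 * (w ⬝ᵥ x) - (lam * (w ⬝ᵥ w) + ∑ i, (u i ⬝ᵥ w) * (u i ⬝ᵥ w)) := by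
  refine ⟨(gramReg lam u)⁻¹ *ᵥ x, ?_⟩
  rw [← gramReg_form, gramReg_inv lam hlam, dotProduct_comm x]
  ring

lemma gramReg_ge {m n : Type} [Fintype m] [DecidableEq m] [Fintype n] (lam : ℝ)
    (hlam : 0 < lam) (u : n → m → ℝ) (x t : m → ℝ) :
    2 * (t ⬝ᵥ x) - (lam * (t ⬝ᵥ t) + ∑ i, (u i ⬝ᵥ t) * (u i ⬝ᵥ t))
      ≤ x ⬝ᵥ ((gramReg lam u)⁻¹ *ᵥ x) := by
  have hi := gramReg_inv lam hlam u x
  set w := (gramReg lam u)⁻¹ *ᵥ x with hw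
  have h1 := gramReg_form lam u (t - w) (t - w)
  have h2 : 0 ≤ ∑ i, (u i ⬝ᵥ (t - w)) * (u i ⬝ᵥ (t - w)) :=
    Finset.sum_nonneg fun i _ => mul_self_nonneg _
  have h3 : 0 ≤ (t - w) ⬝ᵥ (t - w) := Finset.sum_nonneg fun i _ => mul_self_nonneg _
  have h4 : 0 ≤ lam * ((t - w) ⬝ᵥ (t - w)) := by positivity
  have h5 : w ⬝ᵥ (gramReg lam u *ᵥ t) = t ⬝ᵥ x := by
    rw [gramReg_form, ← hi, gramReg_form, dotProduct_comm w t]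
    simp only [mul_comm]
  rw [mulVec_sub, hi, sub_dotProduct, dotProduct_sub, dotProduct_sub, h5,
    gramReg_form lam u t t, dotProduct_comm w x] at h1
  linarith

lemma append_dot {p q : ℕ} (a w1 : Fin p → ℝ) (b w2 : Fin q → ℝ) :
    Fin.append a b ⬝ᵥ Fin.append w1 w2 = a ⬝ᵥ w1 + b ⬝ᵥ w2 := by
  simp [dotProduct, Fin.sum_univ_add]

lemma cons_dot {q : ℕ} (a w1 : ℝ) (b w2 : Fin q → ℝ) :
    (Fin.cons a b : Fin (q + 1) → ℝ) ⬝ᵥ (Fin.cons w1 w2 : Fin (q + 1) → ℝ)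
      = a * w1 + b ⬝ᵥ w2 := by
  simp [dotProduct, Fin.sum_univ_succ]

/-- For `z̃_i = (a', z_i')'` and `z̄_i = (1, z_i')'`, and `ṽ = (a', v')'`,
`v̄ = (1, v')'`, we have
`ṽ'(λI + ∑ z̃_i z̃_i')⁻¹ ṽ ≤ max(1, ‖a‖²) · v̄'(λI + ∑ z̄_i z̄_i')⁻¹ v̄`. -/
theorem stmt_11 (lam : ℝ) (hlam : 0 < lam) (n d1 d2 : ℕ)
    (hn : 1 ≤ n) (hd1 : 1 ≤ d1) (hd2 : 1 ≤ d2)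
    (a : Fin d1 → ℝ) (z : Fin n → Fin d2 → ℝ) (v : Fin d2 → ℝ) :
    (Fin.append a v) ⬝ᵥ
        ((lam • (1 : Matrix (Fin (d1 + d2)) (Fin (d1 + d2)) ℝ)
            + ∑ i, vecMulVec (Fin.append a (z i)) (Fin.append a (z i)))⁻¹
          *ᵥ (Fin.append a v))
      ≤ max 1 (∑ j, (a j) ^ 2) *
        ((Fin.cons 1 v) ⬝ᵥ
          ((lam • (1 : Matrix (Fin (d2 + 1)) (Fin (d2 + 1)) ℝ)
              + ∑ i, vecMulVec (Fin.cons 1 (z i)) (Fin.cons 1 (z i)))⁻¹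
            *ᵥ (Fin.cons 1 v))) := by
  obtain ⟨w, hw⟩ := gramReg_eq lam hlam (fun i => Fin.append a (z i)) (Fin.append a v)
  obtain ⟨w1, w2, rfl⟩ : ∃ w1 w2, w = Fin.append w1 w2 :=
    ⟨fun i => w (Fin.castAdd d2 i), fun i => w (Fin.natAdd d1 i),
      (Fin.append_castAdd_natAdd (f := w)).symm⟩
  set M := max 1 (∑ j, (a j) ^ 2) with hM
  have hM1 : 1 ≤ M := le_max_left _ _
  have hMa : ∑ j, (a j) ^ 2 ≤ M := le_max_right _ _
  have hM0 : 0 < M := by linarith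
  have hg := gramReg_ge lam hlam (fun i => (Fin.cons 1 (z i) : Fin (d2 + 1) → ℝ)) (Fin.cons 1 v)
    (M⁻¹ • (Fin.cons (a ⬝ᵥ w1) w2 : Fin (d2 + 1) → ℝ))
  simp only [smul_dotProduct, dotProduct_smul, cons_dot, smul_eq_mul, one_mul, mul_one] at hg
  simp only [append_dot] at hw
  change _ ⬝ᵥ ((gramReg lam (fun i => Fin.append a (z i)))⁻¹ *ᵥ _) ≤ M *
    (_ ⬝ᵥ ((gramReg lam (fun i => (Fin.cons 1 (z i) : Fin (d2 + 1) → ℝ)))⁻¹ *ᵥ _))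
  rw [hw]
  refine le_trans ?_ (mul_le_mul_of_nonneg_left hg hM0.le)
  have hs : ∑ i, M⁻¹ * (a ⬝ᵥ w1 + z i ⬝ᵥ w2) * (M⁻¹ * (a ⬝ᵥ w1 + z i ⬝ᵥ w2))
      = M⁻¹ * M⁻¹ * ∑ i, (a ⬝ᵥ w1 + z i ⬝ᵥ w2) * (a ⬝ᵥ w1 + z i ⬝ᵥ w2) := by
    rw [Finset.mul_sum]
    exact Finset.sum_congr rfl fun i _ => by ring
  rw [hs]
  have hS : 0 ≤ ∑ i, (a ⬝ᵥ w1 + z i ⬝ᵥ w2) * (a ⬝ᵥ w1 + z i ⬝ᵥ w2) :=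
    Finset.sum_nonneg fun i _ => mul_self_nonneg _
  have hW2 : 0 ≤ w2 ⬝ᵥ w2 := Finset.sum_nonneg fun i _ => mul_self_nonneg _
  have hW1 : 0 ≤ w1 ⬝ᵥ w1 := Finset.sum_nonneg fun i _ => mul_self_nonneg _
  have hcs : (a ⬝ᵥ w1) * (a ⬝ᵥ w1) ≤ M * (w1 ⬝ᵥ w1) := by
    have h := Finset.sum_mul_sq_le_sq_mul_sq Finset.univ a w1
    have h' : w1 ⬝ᵥ w1 = ∑ i, w1 i ^ 2 := by simp [dotProduct, sq]
    have h2 : (a ⬝ᵥ w1) * (a ⬝ᵥ w1) ≤ (∑ j, (a j) ^ 2) * (w1 ⬝ᵥ w1) := by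
      rw [h', ← sq]; exact h
    exact h2.trans (mul_le_mul_of_nonneg_right hMa hW1)
  have hvw : a ⬝ᵥ w1 + w2 ⬝ᵥ v = w1 ⬝ᵥ a + w2 ⬝ᵥ v := by rw [dotProduct_comm a]
  rw [← hvw]
  generalize (∑ i, (a ⬝ᵥ w1 + z i ⬝ᵥ w2) * (a ⬝ᵥ w1 + z i ⬝ᵥ w2)) = S at *
  generalize a ⬝ᵥ w1 = α at *
  generalize w2 ⬝ᵥ w2 = β at *
  generalize w1 ⬝ᵥ w1 = γ at *
  generalize w2 ⬝ᵥ v = δ at *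
  have hc0 : 0 < M⁻¹ := inv_pos.mpr hM0
  have hc1 : M⁻¹ ≤ 1 := inv_le_one_of_one_le₀ hM1
  have hc : M * M⁻¹ = 1 := mul_inv_cancel₀ hM0.ne'
  generalize M⁻¹ = c at *
  have e1 : c * (α * α) ≤ γ := by
    calc c * (α * α) ≤ c * (M * γ) := mul_le_mul_of_nonneg_left hcs hc0.le
      _ = (M * c) * γ := by ring
      _ = γ := by rw [hc, one_mul]
  have e2 : c * β ≤ β := mul_le_of_le_one_left hW2 hc1
  have e3 : c * S ≤ S := mul_le_of_le_one_left hS hc1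
  have e4 : lam * (c * (α * α) + c * β) ≤ lam * (γ + β) :=
    mul_le_mul_of_nonneg_left (add_le_add e1 e2) hlam.le
  calc 2 * (α + δ) - (lam * (γ + β) + S)
      ≤ 2 * (α + δ) - (lam * (c * (α * α) + c * β) + c * S) := by linarith
    _ = 2 * ((M * c) * (α + δ)) - (lam * ((M * c) * (c * (α * α) + c * β)) + (M * c) * (c * S)) := by
        rw [hc]; ring
    _ ≤ _ := le_of_eq (by ring)
end

section
/- Let d ≥ 1 be an integer and C, m_Z > 0. Let Z be an ℝ^d random vector with a Lebesgue density p satisfying sup_{z ∈ ℝ^d} p(z) ≤ C, and with ‖Z‖ ≤ m_Z almost surely. Then there exists a constant C̃ > 0, depending only on d, C and m_Z, such that for every unit vector u ∈ ℝ^d, the random variable u'Z has a Lebesgue density on ℝ bounded above by C̃. -/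
open MeasureTheory Matrix

noncomputable section

theorem aux_density (lam : Measure ℝ) [IsProbabilityMeasure lam] (K : ℝ) (hK : 0 < K)
    (h : ∀ A, MeasurableSet A → lam A ≤ ENNReal.ofReal K * volume A) :
    ∃ q : ℝ → ℝ, (∀ τ, 0 ≤ q τ) ∧ (∀ τ, q τ ≤ K) ∧
      lam = volume.withDensity (fun τ => ENNReal.ofReal (q τ)) := by
  have hac : lam ≪ volume := by
    refine Measure.AbsolutelyContinuous.mk fun A hA h0 => ?_
    have := h A hA
    rw [h0, mul_zero] at this
    exact le_antisymm this (zero_le)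
  have hw := Measure.withDensity_rnDeriv_eq lam volume hac
  have hle : lam.rnDeriv volume ≤ᵐ[volume] fun _ => ENNReal.ofReal K := by
    refine ae_le_of_forall_setLIntegral_le_of_sigmaFinite (Measure.measurable_rnDeriv _ _) ?_
    intro A hA _
    rw [← withDensity_apply _ hA, hw, setLIntegral_const]
    exact h A hA
  refine ⟨fun τ => min (lam.rnDeriv volume τ).toReal K, fun τ => le_min ENNReal.toReal_nonneg hK.le,
    fun τ => min_le_right _ _, ?_⟩
  conv_lhs => rw [← hw]
  refine withDensity_congr_ae ?_
  filter_upwards [hle] with τ hτ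
  have hne : lam.rnDeriv volume τ ≠ ⊤ := ne_top_of_le_ne_top ENNReal.ofReal_ne_top hτ
  rw [min_eq_left (ENNReal.toReal_le_of_le_ofReal hK.le hτ), ENNReal.ofReal_toReal hne]

theorem aux_coord {d : ℕ} (hd : 1 ≤ d) (u : Fin d → ℝ) (hu : eNorm u = 1) :
    ∃ i, 1 ≤ d * |u i| := by
  have h1 : ∑ i, u i ^ 2 = 1 := by
    unfold eNorm at hu
    rwa [Real.sqrt_eq_one] at hu
  by_contra! hcon
  have hd' : (0:ℝ) < d := by exact_mod_cast hd
  have h2 : ∀ i, u i ^ 2 ≤ |u i| := by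
    intro i
    have : u i ^ 2 ≤ 1 := h1 ▸ Finset.single_le_sum (f := fun i => u i ^ 2)
      (fun j _ => sq_nonneg (u j)) (Finset.mem_univ i)
    have h3 : |u i| ≤ 1 := by rwa [← sq_le_one_iff_abs_le_one]
    rw [← sq_abs]
    nlinarith [abs_nonneg (u i)]
  have h4 : ∑ i, u i ^ 2 < ∑ _i : Fin d, (1 / d : ℝ) := by
    refine Finset.sum_lt_sum_of_nonempty ⟨⟨0, hd⟩, Finset.mem_univ _⟩ fun i _ => ?_
    refine (h2 i).trans_lt ?_
    rw [lt_div_iff₀ hd', mul_comm]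
    exact hcon i
  simp at h4
  rw [h1, mul_inv_cancel₀ hd'.ne'] at h4
  exact lt_irrefl _ h4

theorem aux_vol {d : ℕ} (m : ℝ) (u : Fin d → ℝ) (i : Fin d) (hi : 1 ≤ d * |u i|)
    (A : Set ℝ) (hA : MeasurableSet A) :
    volume {x : Fin d → ℝ | u ⬝ᵥ x ∈ A ∧ ∀ j, x j ∈ Set.Icc (-m) m} ≤
      ENNReal.ofReal d * (volume A * ENNReal.ofReal (2 * m) ^ (d - 1)) := by
  let M : Matrix (Fin d) (Fin d) ℝ := (1 : Matrix (Fin d) (Fin d) ℝ).updateRow i u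
  have hdet : M.det = u i := by
    have := Matrix.cramer_transpose_apply (1 : Matrix (Fin d) (Fin d) ℝ) u i
    rw [Matrix.transpose_one, Matrix.cramer_one] at this
    exact this.symm
  have hui : 0 < |u i| := by
    rcases (abs_nonneg (u i)).lt_or_eq with h | h
    · exact h
    · rw [← h] at hi; norm_num at hi
  have hne : M.det ≠ 0 := by rw [hdet]; exact abs_pos.1 hui
  let S : Set (Fin d → ℝ) :=
    Set.pi Set.univ (Function.update (fun _ => Set.Icc (-m) m) i A)
  have hS : MeasurableSet S := by
    refine MeasurableSet.univ_pi fun j => ?_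
    by_cases hj : j = i
    · subst hj; simpa using hA
    · simp [Function.update_of_ne hj]
  have hvS : volume S = volume A * ENNReal.ofReal (2 * m) ^ (d - 1) := by
    rw [volume_pi_pi, ← Finset.mul_prod_erase Finset.univ _ (Finset.mem_univ i),
      Function.update_self]
    congr 1
    rw [Finset.prod_congr rfl (g := fun _ => ENNReal.ofReal (2 * m))]
    · simp
    · intro j hj
      rw [Function.update_of_ne (Finset.ne_of_mem_erase hj), Real.volume_Icc]
      congr 1; ring
  have hmap := Real.map_matrix_volume_pi_eq_smul_volume_pi hne
  have hmeas : Measurable (Matrix.toLin' M) :=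
    (LinearMap.continuous_of_finiteDimensional _).measurable
  calc volume {x : Fin d → ℝ | u ⬝ᵥ x ∈ A ∧ ∀ j, x j ∈ Set.Icc (-m) m}
      ≤ volume (Matrix.toLin' M ⁻¹' S) := by
        refine measure_mono fun x hx => ?_
        intro j _
        rw [Matrix.toLin'_apply]
        by_cases hj : j = i
        · subst hj
          simpa [M, Matrix.mulVec] using hx.1
        · rw [Function.update_of_ne hj]
          have : (M *ᵥ x) j = x j := by
            change M j ⬝ᵥ x = x j
            rw [show M j = (1 : Matrix (Fin d) (Fin d) ℝ) j from Matrix.updateRow_ne hj]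
            change ((1 : Matrix (Fin d) (Fin d) ℝ) *ᵥ x) j = x j
            rw [Matrix.one_mulVec]
          rw [this]
          exact hx.2 j
    _ = ENNReal.ofReal |M.det⁻¹| * volume S := by
        rw [← Measure.map_apply hmeas hS, hmap]; rfl
    _ ≤ _ := by
        rw [hvS]
        gcongr
        rw [hdet, abs_inv]
        rw [inv_le_iff_one_le_mul₀ hui]
        exact hi

/-- If `Z ∈ ℝ^d` has a Lebesgue density bounded by `C` and `‖Z‖ ≤ m_Z` a.s.,
then there is `C̃ > 0`, depending only on `d, C, m_Z`, such that for every unit vector `u`,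
`u'Z` has a Lebesgue density on `ℝ` bounded by `C̃`. -/
theorem stmt_13 (d : ℕ) (hd : 1 ≤ d) (C mZ : ℝ) (hC : 0 < C) (hmZ : 0 < mZ) :
    ∃ Ctilde : ℝ, 0 < Ctilde ∧
      ∀ (Ω : Type) (_ : MeasurableSpace Ω) (μ : Measure Ω), IsProbabilityMeasure μ →
      ∀ (Z : Ω → Fin d → ℝ), Measurable Z →
      ∀ p : (Fin d → ℝ) → ℝ,
        (∀ x, 0 ≤ p x) →
        μ.map Z = MeasureTheory.volume.withDensity (fun x => ENNReal.ofReal (p x)) →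
        (∀ x, p x ≤ C) →
        (∀ᵐ ω ∂μ, eNorm (Z ω) ≤ mZ) →
        ∀ u : Fin d → ℝ, eNorm u = 1 →
          ∃ q : ℝ → ℝ, (∀ τ, 0 ≤ q τ) ∧ (∀ τ, q τ ≤ Ctilde) ∧
            μ.map (fun ω => u ⬝ᵥ Z ω)
              = MeasureTheory.volume.withDensity (fun τ => ENNReal.ofReal (q τ)) := by
  have hd' : (0:ℝ) < d := by exact_mod_cast hd
  have hKpos : 0 < C * (d * (2 * mZ) ^ (d - 1)) := by positivity
  refine ⟨C * (d * (2 * mZ) ^ (d - 1)), hKpos, ?_⟩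
  intro Ω _ μ _ Z hZ p _ hp hpC hb u hu
  have hdot : Measurable (fun x : Fin d → ℝ => u ⬝ᵥ x) := by
    unfold dotProduct; fun_prop
  have hm : Measurable (fun ω => u ⬝ᵥ Z ω) := hdot.comp hZ
  have : IsProbabilityMeasure (μ.map (fun ω => u ⬝ᵥ Z ω)) :=
    Measure.isProbabilityMeasure_map hm.aemeasurable
  obtain ⟨i, hi⟩ := aux_coord hd u hu
  refine aux_density _ _ hKpos fun A hA => ?_
  rw [Measure.map_apply hm hA]
  have hT : MeasurableSet {x : Fin d → ℝ | u ⬝ᵥ x ∈ A ∧ ∀ j, x j ∈ Set.Icc (-mZ) mZ} := by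
    have h2 : MeasurableSet (Set.pi Set.univ (fun _ : Fin d => Set.Icc (-mZ) mZ)) :=
      MeasurableSet.univ_pi fun _ => measurableSet_Icc
    convert (hdot hA).inter h2 using 1
    ext x
    simp only [Set.mem_setOf_eq, Set.mem_inter_iff, Set.mem_preimage, Set.mem_univ_pi]
  calc μ ((fun ω => u ⬝ᵥ Z ω) ⁻¹' A)
      ≤ μ (Z ⁻¹' {x : Fin d → ℝ | u ⬝ᵥ x ∈ A ∧ ∀ j, x j ∈ Set.Icc (-mZ) mZ}) := by
        refine measure_mono_ae ?_
        filter_upwards [hb] with ω hω hA'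
        refine ⟨hA', fun j => ?_⟩
        rw [Set.mem_Icc, ← abs_le]
        refine le_trans ?_ hω
        unfold eNorm
        refine Real.abs_le_sqrt ?_
        exact Finset.single_le_sum (f := fun j => Z ω j ^ 2)
          (fun j _ => sq_nonneg _) (Finset.mem_univ j)
    _ = ∫⁻ x in {x : Fin d → ℝ | u ⬝ᵥ x ∈ A ∧ ∀ j, x j ∈ Set.Icc (-mZ) mZ},
          ENNReal.ofReal (p x) := by
        rw [← Measure.map_apply hZ hT, hp, withDensity_apply _ hT]
    _ ≤ ENNReal.ofReal C *
          volume {x : Fin d → ℝ | u ⬝ᵥ x ∈ A ∧ ∀ j, x j ∈ Set.Icc (-mZ) mZ} := by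
        rw [← setLIntegral_const]
        exact lintegral_mono fun x => ENNReal.ofReal_le_ofReal (hpC x)
    _ ≤ ENNReal.ofReal C *
          (ENNReal.ofReal d * (volume A * ENNReal.ofReal (2 * mZ) ^ (d - 1))) := by
        gcongr
        exact aux_vol mZ u i hi A hA
    _ = _ := by
        rw [ENNReal.ofReal_mul hC.le, ENNReal.ofReal_mul hd'.le,
          ENNReal.ofReal_pow (by positivity)]
        ring
end
end
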